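/- Let Y^n = B^n + Z^n, where B^n is a random vector in ℝ^n with E[‖B^n‖] < ∞ that is independent of Z^n ∼ N(0, σ_Z²·I_n), with I_n the n×n identity matrix and σ_Z² > 0. Then Y^n has an everywhere positive, differentiable density p_Y that is (c1,c2)-regular with c1 = 3/σ_Z² and c2 = (4/σ_Z²)·E[‖B^n‖] (with the natural logarithm). -/

import Mathlib

open MeasureTheory Real ProbabilityTheory
open scoped BigOperators ENNReal

noncomputable section

/-- A probability density on `ℝⁿ` (Euclidean space): nonnegative, integrable, integrating to one. -/
def IsDensity {n : ℕ} (f : EuclideanSpace ℝ (Fin n) → ℝ) : Prop :=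
  (∀ x, 0 ≤ f x) ∧ Integrable f ∧ (∫ x, f x) = 1

/-- `(c₁, c₂)`-regularity of a density (Polyanskiy–Wu): everywhere positive, differentiable,
and `‖∇ log f(x)‖ ≤ c₁‖x‖ + c₂`. -/
def IsRegularDensity {n : ℕ} (c₁ c₂ : ℝ) (f : EuclideanSpace ℝ (Fin n) → ℝ) : Prop :=
  (∀ x, 0 < f x) ∧ Differentiable ℝ f ∧
    ∀ x : EuclideanSpace ℝ (Fin n),
      ‖gradient (fun y => Real.log (f y)) x‖ ≤ c₁ * ‖x‖ + c₂

/-- Kullback–Leibler divergence between two densities (natural logarithm). -/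
def klDiv' {n : ℕ} (f g : EuclideanSpace ℝ (Fin n) → ℝ) : ℝ :=
  ∫ x, f x * Real.log (f x / g x)

/-- Mean vector of a density. -/
def meanVec {n : ℕ} (f : EuclideanSpace ℝ (Fin n) → ℝ) : Fin n → ℝ :=
  fun i => ∫ x, f x * x i

/-- Covariance matrix of a density. -/
def covMat {n : ℕ} (f : EuclideanSpace ℝ (Fin n) → ℝ) : Matrix (Fin n) (Fin n) ℝ :=
  Matrix.of fun i j => ∫ x, f x * (x i - meanVec f i) * (x j - meanVec f j)

/-- The Gaussian density on `ℝⁿ` with mean vector `m` and covariance matrix `R`. -/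
def gaussDensity {n : ℕ} (m : Fin n → ℝ) (R : Matrix (Fin n) (Fin n) ℝ)
    (x : EuclideanSpace ℝ (Fin n)) : ℝ :=
  (2 * π) ^ (-(n : ℝ) / 2) * R.det ^ (-(1 : ℝ) / 2) *
    Real.exp (-(1 / 2) * ∑ i, ∑ j, (x i - m i) * R⁻¹ i j * (x j - m j))

/-- `D(f) = D(f ‖ g)` where `g` is the Gaussian density with the same mean vector and
covariance matrix as `f`. -/
def KLtoGauss {n : ℕ} (f : EuclideanSpace ℝ (Fin n) → ℝ) : ℝ :=
  klDiv' f (gaussDensity (meanVec f) (covMat f))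

/-- The vector `(X_k, X_{k+1}, …, X_{k+n-1})` of a process, as a point of Euclidean space. -/
def pathVec {Ω : Type*} (X : ℕ → Ω → ℝ) (k n : ℕ) (ω : Ω) : EuclideanSpace ℝ (Fin n) :=
  (WithLp.equiv 2 (Fin n → ℝ)).symm fun i : Fin n => X (k + i) ω

/-- The centered isotropic Gaussian density on `ℝⁿ` with covariance `v • Iₙ`. -/
def isoGaussDensity (n : ℕ) (v : ℝ) (x : EuclideanSpace ℝ (Fin n)) : ℝ :=
  (2 * π * v) ^ (-(n : ℝ) / 2) * Real.exp (-‖x‖ ^ 2 / (2 * v))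

/-- Log-concavity of a nonnegative function. -/
def LogConcaveFn {n : ℕ} (f : EuclideanSpace ℝ (Fin n) → ℝ) : Prop :=
  ∀ x y : EuclideanSpace ℝ (Fin n), ∀ t : ℝ, 0 ≤ t → t ≤ 1 →
    f x ^ t * f y ^ (1 - t) ≤ f (t • x + (1 - t) • y)

/-- A zero-mean Gaussian random vector with covariance matrix `R`: every linear functional of it
is a centered real Gaussian with the corresponding variance. -/
def IsCenteredGaussianVec {Ω : Type*} [MeasurableSpace Ω] {n : ℕ} (P : Measure Ω)
    (W : Ω → EuclideanSpace ℝ (Fin n)) (R : Matrix (Fin n) (Fin n) ℝ) : Prop :=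
  ∀ a : Fin n → ℝ, Measure.map (fun ω => ∑ i, a i * W ω i) P
    = gaussianReal 0 (Real.toNNReal (∑ i, ∑ j, a i * R i j * a j))

/-- Hadamard (element-wise) product of two Euclidean vectors. -/
def hadamard {n : ℕ} (u v : EuclideanSpace ℝ (Fin n)) : EuclideanSpace ℝ (Fin n) :=
  (WithLp.equiv 2 (Fin n → ℝ)).symm fun i => u i * v i

end

noncomputable section
open MeasureTheory Real ProbabilityTheory

theorem isoG_const_pos (n : ℕ) {v : ℝ} (hv : 0 < v) : 0 < (2 * π * v) ^ (-(n : ℝ) / 2) := by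
  have := Real.pi_pos
  positivity

theorem isoG_pos (n : ℕ) {v : ℝ} (hv : 0 < v) (x : EuclideanSpace ℝ (Fin n)) :
    0 < isoGaussDensity n v x :=
  mul_pos (isoG_const_pos n hv) (Real.exp_pos _)

theorem isoG_cont (n : ℕ) (v : ℝ) : Continuous (isoGaussDensity n v) := by
  unfold isoGaussDensity
  fun_prop

theorem isoG_le (n : ℕ) {v : ℝ} (hv : 0 < v) (x : EuclideanSpace ℝ (Fin n)) :
    isoGaussDensity n v x ≤ (2 * π * v) ^ (-(n : ℝ) / 2) := by
  unfold isoGaussDensity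
  refine mul_le_of_le_one_right (isoG_const_pos n hv).le (Real.exp_le_one_iff.2 ?_)
  rw [neg_div, neg_nonpos]
  positivity

theorem isoG_norm_le (n : ℕ) {v : ℝ} (hv : 0 < v) (x : EuclideanSpace ℝ (Fin n)) :
    isoGaussDensity n v x * ‖x‖ ≤ (2 * π * v) ^ (-(n : ℝ) / 2) * (1 + 2 * v) := by
  unfold isoGaussDensity
  rw [mul_assoc]
  refine mul_le_mul_of_nonneg_left ?_ (isoG_const_pos n hv).le
  set t := ‖x‖ ^ 2 / (2 * v) with ht
  have ht0 : 0 ≤ t := by positivity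
  have h1 : t + 1 ≤ Real.exp t := Real.add_one_le_exp t
  have hx : ‖x‖ ^ 2 = 2 * v * t := by rw [ht]; field_simp
  have h2 : ‖x‖ ≤ (1 + 2 * v) * (t + 1) := by
    nlinarith [sq_nonneg (‖x‖ - 1), norm_nonneg x, mul_nonneg hv.le ht0]
  rw [neg_div, ← ht, Real.exp_neg, inv_mul_le_iff₀ (Real.exp_pos t)]
  nlinarith

theorem isoG_anti (n : ℕ) {v : ℝ} (hv : 0 < v) {r : ℝ} {x : EuclideanSpace ℝ (Fin n)}
    (hr : 0 ≤ r) (h : r ≤ ‖x‖) :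
    isoGaussDensity n v x ≤ (2 * π * v) ^ (-(n : ℝ) / 2) * Real.exp (-r ^ 2 / (2 * v)) := by
  unfold isoGaussDensity
  have := isoG_const_pos n hv
  gcongr

theorem isoG_anti' (n : ℕ) {v : ℝ} (hv : 0 < v) {r : ℝ} {x : EuclideanSpace ℝ (Fin n)}
    (h : ‖x‖ ≤ r) :
    (2 * π * v) ^ (-(n : ℝ) / 2) * Real.exp (-r ^ 2 / (2 * v)) ≤ isoGaussDensity n v x := by
  unfold isoGaussDensity
  have := isoG_const_pos n hv
  gcongr

theorem isoG_pointwise (n : ℕ) {v : ℝ} (hv : 0 < v) {M : ℝ} (hM : 0 ≤ M)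
    (x b : EuclideanSpace ℝ (Fin n)) :
    (‖b‖ - (2 * ‖x‖ + 4 * M)) * isoGaussDensity n v (x - b) ≤
      2 * ((2 * π * v) ^ (-(n : ℝ) / 2) * Real.exp (-(‖x‖ + 2 * M) ^ 2 / (2 * v))) *
        (‖b‖ - M) := by
  have hx := norm_nonneg x
  have hb := norm_nonneg b
  have hφ := isoG_pos n hv (x - b)
  have hc0 : 0 < (2 * π * v) ^ (-(n : ℝ) / 2) * Real.exp (-(‖x‖ + 2 * M) ^ 2 / (2 * v)) :=
    mul_pos (isoG_const_pos n hv) (Real.exp_pos _)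
  have hA : ‖x‖ + 2 * M ≤ ‖x - b‖ → isoGaussDensity n v (x - b) ≤ _ :=
    isoG_anti n hv (by positivity)
  have hB : ‖x - b‖ ≤ ‖x‖ + 2 * M → _ ≤ isoGaussDensity n v (x - b) := isoG_anti' n hv
  set c := (2 * π * v) ^ (-(n : ℝ) / 2) * Real.exp (-(‖x‖ + 2 * M) ^ 2 / (2 * v))
  set φ := isoGaussDensity n v (x - b)
  have h1 : (‖b‖ - (2 * ‖x‖ + 2 * M)) * φ ≤ c * ‖b‖ := by
    by_cases h : ‖b‖ ≤ 2 * ‖x‖ + 2 * M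
    · have : (‖b‖ - (2 * ‖x‖ + 2 * M)) * φ ≤ 0 :=
        mul_nonpos_of_nonpos_of_nonneg (by linarith) hφ.le
      have : 0 ≤ c * ‖b‖ := by positivity
      linarith
    · push Not at h
      have h3 : φ ≤ c := hA (by
        have := norm_sub_norm_le b x
        rw [norm_sub_rev] at this
        linarith)
      calc _ ≤ (‖b‖ - (2 * ‖x‖ + 2 * M)) * c := by gcongr
        _ ≤ _ := by nlinarith
  have h2 : c * (2 * M - ‖b‖) ≤ 2 * M * φ := by
    by_cases h : ‖b‖ ≤ 2 * M
    · have h3 : c ≤ φ := hB (by have := norm_sub_le x b; linarith)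
      nlinarith
    · push Not at h
      have : c * (2 * M - ‖b‖) ≤ 0 := mul_nonpos_of_nonneg_of_nonpos hc0.le (by linarith)
      have : 0 ≤ 2 * M * φ := by positivity
      linarith
  nlinarith

theorem isoG_hasFDerivAt (n : ℕ) {v : ℝ} (hv : 0 < v) (b x : EuclideanSpace ℝ (Fin n)) :
    HasFDerivAt (fun y => isoGaussDensity n v (y - b))
      ((-(1 / v) * isoGaussDensity n v (x - b)) • innerSL ℝ (x - b)) x := by
  have h1 : HasFDerivAt (fun y : EuclideanSpace ℝ (Fin n) => y - b)
    (ContinuousLinearMap.id ℝ _) x := (hasFDerivAt_id x).sub_const b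
  have h2 := ((h1.norm_sq.const_mul (-(1 / (2 * v)))).exp).const_mul
    ((2 * π * v) ^ (-(n : ℝ) / 2))
  refine (h2.congr_fderiv ?_).congr_of_eventuallyEq ?_
  · ext w
    simp [isoGaussDensity]
    field_simp
  · refine Filter.Eventually.of_forall fun y => ?_
    simp only [isoGaussDensity]
    congr 2
    field_simp

theorem isoG_law {Ω : Type*} [MeasurableSpace Ω] (P : Measure Ω) [IsProbabilityMeasure P]
    {n : ℕ} (B Z : Ω → EuclideanSpace ℝ (Fin n)) (hB : Measurable B) (hZ : Measurable Z)
    (g : EuclideanSpace ℝ (Fin n) → ENNReal) (hg : Measurable g)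
    (hZlaw : Measure.map Z P = volume.withDensity g)
    (hindep : IndepFun B Z P) :
    Measure.map (fun ω => B ω + Z ω) P
          = volume.withDensity (fun x => ∫⁻ ω, g (x - B ω) ∂P) := by
  have hind := (indepFun_iff_map_prod_eq_prod_map_map hB.aemeasurable hZ.aemeasurable).1 hindep
  have : IsProbabilityMeasure (Measure.map Z P) := Measure.isProbabilityMeasure_map hZ.aemeasurable
  refine Measure.ext_of_lintegral _ fun f hf => ?_
  have hgB : Measurable (Function.uncurry fun (x : EuclideanSpace ℝ (Fin n)) ω => g (x - B ω)) := by
    unfold Function.uncurry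
    fun_prop
  rw [lintegral_map hf (by fun_prop)]
  have e1 : ∫⁻ ω, f (B ω + Z ω) ∂P = ∫⁻ p, f (p.1 + p.2) ∂(P.map fun ω => (B ω, Z ω)) := by
    rw [lintegral_map (by fun_prop) (by fun_prop)]
  rw [e1, hind, lintegral_prod _ (by fun_prop), lintegral_map _ hB]
  · rw [lintegral_withDensity_eq_lintegral_mul _ hgB.lintegral_prod_right hf]
    simp only [Pi.mul_apply]
    have e2 : ∀ x, (∫⁻ ω, g (x - B ω) ∂P) * f x = ∫⁻ ω, g (x - B ω) * f x ∂P := fun x => by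
      rw [lintegral_mul_const _ (by fun_prop)]
    simp_rw [e2]
    symm
    rw [lintegral_lintegral_swap]
    · symm
      refine lintegral_congr fun ω => ?_
      rw [hZlaw, lintegral_withDensity_eq_lintegral_mul _ hg (by fun_prop),
        ← lintegral_add_left_eq_self (fun x => g (x - B ω) * f x) (B ω)]
      simp
    · exact (hgB.mul (hf.comp measurable_fst)).aemeasurable
  · exact Measurable.lintegral_prod_right' (f := fun p : EuclideanSpace ℝ (Fin n) ×
      EuclideanSpace ℝ (Fin n) => f (p.1 + p.2)) (by fun_prop)

theorem stmt11 {Ω : Type*} [MeasurableSpace Ω] (P : Measure Ω) [IsProbabilityMeasure P]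
    {n : ℕ} (B Z : Ω → EuclideanSpace ℝ (Fin n)) (hB : Measurable B) (hZ : Measurable Z)
    (hBmom : Integrable (fun ω => ‖B ω‖) P)
    (σ2 : ℝ) (hσ2 : 0 < σ2)
    (hZlaw : Measure.map Z P = volume.withDensity fun x => ENNReal.ofReal (isoGaussDensity n σ2 x))
    (hindep : IndepFun B Z P) :
    ∃ pY : EuclideanSpace ℝ (Fin n) → ℝ,
      Measure.map (fun ω => B ω + Z ω) P
          = volume.withDensity (fun x => ENNReal.ofReal (pY x)) ∧
        IsRegularDensity (3 / σ2) (4 / σ2 * ∫ ω, ‖B ω‖ ∂P) pY := by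
  have hgc := isoG_cont n σ2
  set C := (2 * π * σ2) ^ (-(n : ℝ) / 2) with hC
  have hint : ∀ x, Integrable (fun ω => isoGaussDensity n σ2 (x - B ω)) P := fun x => by
    refine Integrable.of_bound (hgc.measurable.comp (by fun_prop)).aestronglyMeasurable C
      (Filter.Eventually.of_forall fun ω => ?_)
    rw [Real.norm_of_nonneg (isoG_pos n hσ2 _).le]
    exact isoG_le n hσ2 _
  have hnF : ∀ x ω, ‖(-(1 / σ2) * isoGaussDensity n σ2 (x - B ω)) • innerSL ℝ (x - B ω)‖
      = 1 / σ2 * (isoGaussDensity n σ2 (x - B ω) * ‖x - B ω‖) := fun x ω => by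
    rw [norm_smul, innerSL_apply_norm, norm_mul, norm_neg,
      Real.norm_of_nonneg (isoG_pos n hσ2 _).le, Real.norm_of_nonneg (by positivity)]
    ring
  have hpos : ∀ x, 0 < ∫ ω, isoGaussDensity n σ2 (x - B ω) ∂P := fun x => by
    rw [integral_pos_iff_support_of_nonneg (fun ω => (isoG_pos n hσ2 _).le) (hint x)]
    have : (Function.support fun ω => isoGaussDensity n σ2 (x - B ω)) = Set.univ := by
      ext ω
      simp [(isoG_pos n hσ2 (x - B ω)).ne']
    rw [this]
    simp
  have hder : ∀ x, HasFDerivAt (fun y => ∫ ω, isoGaussDensity n σ2 (y - B ω) ∂P)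
      (∫ ω, (-(1 / σ2) * isoGaussDensity n σ2 (x - B ω)) • innerSL ℝ (x - B ω) ∂P) x := fun x => by
    refine hasFDerivAt_integral_of_dominated_of_fderiv_le (s := Set.univ)
      (F' := fun x ω => (-(1 / σ2) * isoGaussDensity n σ2 (x - B ω)) • innerSL ℝ (x - B ω))
      (bound := fun _ => 1 / σ2 * (C * (1 + 2 * σ2))) Filter.univ_mem
      (Filter.Eventually.of_forall fun y => (hint y).1) (hint x) ?_
      (Filter.Eventually.of_forall fun ω y _ => ?_) (integrable_const _)
      (Filter.Eventually.of_forall fun ω y _ => isoG_hasFDerivAt n hσ2 _ _)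
    · have hc : Continuous fun u : EuclideanSpace ℝ (Fin n) =>
          (-(1 / σ2) * isoGaussDensity n σ2 u) • innerSL ℝ u :=
        (continuous_const.mul hgc).smul (innerSL ℝ).continuous
      exact (hc.measurable.comp (by fun_prop : Measurable fun ω => x - B ω)).aestronglyMeasurable
    · rw [hnF]
      exact mul_le_mul_of_nonneg_left (isoG_norm_le n hσ2 _) (by positivity)
  refine ⟨fun x => ∫ ω, isoGaussDensity n σ2 (x - B ω) ∂P, ?_, hpos,
    fun x => (hder x).differentiableAt, fun x => ?_⟩
  · rw [isoG_law P B Z hB hZ _ hgc.measurable.ennreal_ofReal hZlaw hindep]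
    congr 1
    ext x
    exact (ofReal_integral_eq_lintegral_ofReal (hint x)
      (Filter.Eventually.of_forall fun ω => (isoG_pos n hσ2 _).le)).symm
  · have hp := hpos x
    rw [gradient, LinearIsometryEquiv.norm_map, ((hder x).log hp.ne').fderiv, norm_smul, norm_inv,
      Real.norm_of_nonneg hp.le, inv_mul_le_iff₀ hp]
    set M := ∫ ω, ‖B ω‖ ∂P with hMdef
    have hM : 0 ≤ M := integral_nonneg fun ω => norm_nonneg _
    have hbint : Integrable (fun ω => ‖B ω‖ * isoGaussDensity n σ2 (x - B ω)) P := by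
      refine hBmom.mul_bdd (c := C) (hint x).1 (Filter.Eventually.of_forall fun ω => ?_)
      rw [Real.norm_of_nonneg (isoG_pos n hσ2 _).le]
      exact isoG_le n hσ2 _
    set p := ∫ ω, isoGaussDensity n σ2 (x - B ω) ∂P with hpdef
    have key : ∫ ω, ‖B ω‖ * isoGaussDensity n σ2 (x - B ω) ∂P ≤ (2 * ‖x‖ + 4 * M) * p := by
      have h := integral_mono (μ := P)
        (f := fun ω => (‖B ω‖ - (2 * ‖x‖ + 4 * M)) * isoGaussDensity n σ2 (x - B ω))
        (g := fun ω => 2 * (C * Real.exp (-(‖x‖ + 2 * M) ^ 2 / (2 * σ2))) * (‖B ω‖ - M))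
        (by simp only [sub_mul]; exact hbint.sub ((hint x).const_mul _))
        ((hBmom.sub (integrable_const M)).const_mul _)
        (fun ω => isoG_pointwise n hσ2 hM x (B ω))
      simp only [sub_mul] at h
      rw [integral_sub hbint ((hint x).const_mul _), integral_const_mul, integral_const_mul,
        integral_sub hBmom (integrable_const M)] at h
      simp only [integral_const, probReal_univ, one_smul] at h
      rw [← hMdef, sub_self, mul_zero] at h
      linarith
    calc _ ≤ ∫ ω, 1 / σ2 * (‖x‖ * isoGaussDensity n σ2 (x - B ω)
              + ‖B ω‖ * isoGaussDensity n σ2 (x - B ω)) ∂P := by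
          refine norm_integral_le_of_norm_le ((((hint x).const_mul _).add hbint).const_mul _)
            (Filter.Eventually.of_forall fun ω => ?_)
          rw [hnF]
          refine mul_le_mul_of_nonneg_left ?_ (by positivity)
          have := norm_sub_le x (B ω)
          nlinarith [isoG_pos n hσ2 (x - B ω)]
      _ = 1 / σ2 * (‖x‖ * p + ∫ ω, ‖B ω‖ * isoGaussDensity n σ2 (x - B ω) ∂P) := by
          rw [integral_const_mul, integral_add ((hint x).const_mul _) hbint, integral_const_mul]
      _ ≤ 1 / σ2 * (‖x‖ * p + (2 * ‖x‖ + 4 * M) * p) := by gcongr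
      _ = _ := by ring

end
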